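/- Let D_{1,0} = D¹_0 and for r ≥ 2 define D_{r,0} = (1/(r−1))·[D¹_1, D_{r−1,0}] recursively in SH⁺. Then [D_{l,0}, D_{l',0}] = 0 for all l, l' ≥ 1; that is, the elements D_{l,0} pairwise commute in SH⁺. -/

import Mathlib

noncomputable section

/-- The base field `F = ℂ(κ)`, rational functions over `ℂ`. -/
abbrev F : Type := RatFunc ℂ

/-- The formal parameter `κ ∈ F`. -/
noncomputable def κ : F := RatFunc.X

/-- Commutator `[a,b] = a*b - b*a` in an associative ring. -/
def br {A : Type*} [Ring A] (a b : A) : A := a * b - b * a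

/-- Generators of `SH⁺` : `D0 n` stands for `D⁰_{n+1}` (`l = n+1 ≥ 1`),
`D1 k` stands for `D¹_k` (`k ≥ 0`). -/
inductive Gen : Type
  | D0 : ℕ → Gen
  | D1 : ℕ → Gen

/-- `D⁰_{n+1}` as an element of the free algebra. -/
noncomputable def g0 (n : ℕ) : FreeAlgebra F Gen := FreeAlgebra.ι F (Gen.D0 n)

/-- `D¹_k` as an element of the free algebra. -/
noncomputable def g1 (k : ℕ) : FreeAlgebra F Gen := FreeAlgebra.ι F (Gen.D1 k)

/-- Defining relations of `SH⁺`.  Recall `g0 n = D⁰_{n+1}`, so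
`mix l k` says `[D⁰_{l+1}, D¹_k] = D¹_{(l+1)+k-1}`. -/
inductive SHRel : FreeAlgebra F Gen → FreeAlgebra F Gen → Prop
  | comm0 (l k : ℕ) : SHRel (br (g0 l) (g0 k)) 0
  | mix (l k : ℕ) : SHRel (br (g0 l) (g1 k)) (g1 (l + k))
  | quad : SHRel (3 * br (g1 2) (g1 1) - br (g1 3) (g1 0) + br (g1 1) (g1 0)
      + (κ * (κ - 1)) • (g1 0 * g1 0 + br (g1 1) (g1 0))) 0
  | cubic : SHRel (br (g1 0) (br (g1 0) (g1 1))) 0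

/-- The algebra `SH⁺`, presented by generators and relations. -/
abbrev SHp : Type := RingQuot SHRel

/-- `D⁰_l ∈ SH⁺` (meaningful for `l ≥ 1`). -/
noncomputable def D0 (l : ℕ) : SHp := RingQuot.mkAlgHom F SHRel (g0 (l - 1))

/-- `D¹_k ∈ SH⁺`. -/
noncomputable def D1 (k : ℕ) : SHp := RingQuot.mkAlgHom F SHRel (g1 k)

/-- `D_{r,0}`: `D_{1,0} = D¹_0` and `D_{r,0} = (1/(r-1))·[D¹_1, D_{r-1,0}]` for `r ≥ 2`. -/
noncomputable def Drow : ℕ → SHp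
  | 0 => 0
  | 1 => D1 0
  | (n + 2) => ((n + 1 : F)⁻¹) • br (D1 1) (Drow (n + 1))

section LieLemmas

variable {K : Type*} [Field K] [CharZero K] {L : Type*} [LieRing L] [LieAlgebra K L]

/-- The Serre relation spread to `(1,1,1)`. -/
theorem serre_one (d e : ℕ → L) (hde : ∀ l k, ⁅d l, e k⁆ = e (l + k))
    (hs : ⁅e 0, ⁅e 0, e 1⁆⁆ = 0) : (6 : K) • ⁅e 1, ⁅e 1, e 2⁆⁆ = 0 := by
  have hf : ∀ l i j k, ⁅d l, ⁅e i, ⁅e j, e k⁆⁆⁆ =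
      ⁅e (l + i), ⁅e j, e k⁆⁆ + ⁅e i, ⁅e (l + j), e k⁆⁆ + ⁅e i, ⁅e j, e (l + k)⁆⁆ := by
    intro l i j k
    rw [leibniz_lie (d l), leibniz_lie (d l) (e j), hde, hde, hde, lie_add, add_assoc]
  have h3 : ⁅d 1, ⁅d 1, ⁅d 1, ⁅e 0, ⁅e 0, e 1⁆⁆⁆⁆⁆ = 0 := by simp [hs]
  have h2 : ⁅d 1, ⁅d 2, ⁅e 0, ⁅e 0, e 1⁆⁆⁆⁆ = 0 := by simp [hs]
  have h1 : ⁅d 3, ⁅e 0, ⁅e 0, e 1⁆⁆⁆ = 0 := by simp [hs]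
  simp only [hf, lie_add, Nat.reduceAdd] at h1 h2 h3
  linear_combination (norm := module) (1 : K) • h3 - (3 : K) • h2 + (2 : K) • h1

theorem smul_cancel {c : K} (hc : c ≠ 0) {a : L} (h : c • a = 0) : a = 0 :=
  (smul_eq_zero.mp h).resolve_left hc

/-- The base computation. -/
theorem base (d e X M : ℕ → L) (hde : ∀ l k, ⁅d l, e k⁆ = e (l + k))
    (hs : ⁅e 0, ⁅e 0, e 1⁆⁆ = 0)
    (hq : ⁅⁅e 3, e 0⁆, e 0⁆ = (3 : K) • ⁅⁅e 2, e 1⁆, e 0⁆)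
    (hX0 : X 0 = e 0) (hX : ∀ n : ℕ, ((n : K) + 1) • X (n + 1) = ⁅e 1, X n⁆)
    (hM : ∀ n : ℕ, ((n : K) + 1) • M n = ⁅d 1, X n⁆) :
    ⁅⁅e 2, e 1⁆, X 0⁆ = (2 : K) • M 2 ∧ ⁅e 2, X 1⁆ = (4 : K) • M 2 := by
  have hX1 : X 1 = ⁅e 1, e 0⁆ := by
    have := hX 0
    rw [hX0] at this
    simpa using this
  have hsX : ⁅e 0, X 1⁆ = 0 := by
    rw [hX1, ← lie_skew (e 1) (e 0), lie_neg, hs, neg_zero]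
  -- apply `d 2` to the Serre relation
  have h1 : ⁅d 2, ⁅e 0, X 1⁆⁆ = 0 := by rw [hsX, lie_zero]
  rw [leibniz_lie, hde] at h1
  have h2 : ⁅d 2, X 1⁆ = ⁅e 3, e 0⁆ - ⁅e 2, e 1⁆ := by
    rw [hX1, leibniz_lie, hde, hde, ← lie_skew (e 1) (e (2 + 0))]
    abel
  rw [h2, lie_sub, ← lie_skew (e 0) ⁅e 3, e 0⁆, ← lie_skew (e 0) ⁅e 2, e 1⁆, hq] at h1
  -- so `⁅e 2, X 1⁆ = 2 E`
  have hy2 : ⁅d 1, X 1⁆ = ⁅e 2, e 0⁆ := by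
    rw [hX1, leibniz_lie, hde, hde]
    simp
  have h3 : ⁅⁅e 2, e 1⁆, e 0⁆ = ⁅e 2, X 1⁆ - ⁅e 1, ⁅e 2, e 0⁆⁆ := by
    rw [hX1, leibniz_lie (e 2)]
    abel
  have h4 : ⁅d 1, ⁅e 1, X 1⁆⁆ = ⁅e 2, X 1⁆ + ⁅e 1, ⁅e 2, e 0⁆⁆ := by
    rw [leibniz_lie, hde, hy2]
  have h5 : ⁅d 1, ⁅e 1, X 1⁆⁆ = (6 : K) • M 2 := by
    rw [← hX 1, lie_smul, ← hM 2, smul_smul]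
    norm_num
  rw [h5] at h4
  simp only [Nat.reduceAdd] at h1
  rw [hX0]
  constructor
  · have : (3 : K) • (⁅⁅e 2, e 1⁆, e 0⁆ - (2 : K) • M 2) = 0 := by
      linear_combination (norm := module) (-2 : K) • h1 - (1 : K) • h3 - (1 : K) • h4
    exact sub_eq_zero.mp (smul_cancel (by norm_num) this)
  · have : (3 : K) • (⁅e 2, X 1⁆ - (4 : K) • M 2) = 0 := by
      linear_combination (norm := module) (-1 : K) • h1 - (2 : K) • h3 - (2 : K) • h4
    exact sub_eq_zero.mp (smul_cancel (by norm_num) this)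

/-- The Witt-type relation `[L_1, L_k] = (k-1) L_{k+1}`. -/
theorem witt (d e X M : ℕ → L) (hde : ∀ l k, ⁅d l, e k⁆ = e (l + k))
    (hs : ⁅e 0, ⁅e 0, e 1⁆⁆ = 0)
    (hq : ⁅⁅e 3, e 0⁆, e 0⁆ = (3 : K) • ⁅⁅e 2, e 1⁆, e 0⁆)
    (hX0 : X 0 = e 0) (hX : ∀ n : ℕ, ((n : K) + 1) • X (n + 1) = ⁅e 1, X n⁆)
    (hM : ∀ n : ℕ, ((n : K) + 1) • M n = ⁅d 1, X n⁆) (n : ℕ) :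
    ⁅e 1, M n⁆ = (n : K) • M (n + 1) := by
  obtain ⟨b1, b2⟩ := base d e X M hde hs hq hX0 hX hM
  have hG : ⁅⁅e 2, e 1⁆, e 1⁆ = 0 := by
    have := smul_cancel (by norm_num) (serre_one (K := K) d e hde hs)
    rw [← lie_skew, ← lie_skew (e 2) (e 1), lie_neg, this]
    simp
  have hn : ∀ n : ℕ, (n : K) + 1 ≠ 0 := fun n => by exact_mod_cast Nat.succ_ne_zero n
  -- `B` in terms of `M`
  have hB : ∀ n : ℕ, (((n : K) + 1) * ((n : K) + 2)) • M (n + 1) =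
      ⁅e 2, X n⁆ + ((n : K) + 1) • ⁅e 1, M n⁆ := by
    intro n
    have h := congrArg (fun t => ⁅d 1, t⁆) (hX n)
    simp only [lie_smul] at h
    rw [← hM, leibniz_lie (d 1), hde, ← hM, lie_smul] at h
    rw [← h, smul_smul]
    push_cast
    congr 1
    ring
  have hA : ∀ n : ℕ, ⁅⁅e 2, e 1⁆, X n⁆ =
      ((n : K) + 1) • ⁅e 2, X (n + 1)⁆ - ⁅e 1, ⁅e 2, X n⁆⁆ := by
    intro n
    rw [← lie_smul, hX, leibniz_lie (e 2)]
    abel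
  have key : ∀ n : ℕ, ⁅⁅e 2, e 1⁆, X n⁆ = (2 * ((n : K) + 1)) • M (n + 2) ∧
      ⁅e 2, X (n + 1)⁆ = (2 * ((n : K) + 2)) • M (n + 2) := by
    intro n
    induction n with
    | zero => refine ⟨by simpa using b1, ?_⟩; rw [b2]; norm_num
    | succ n ih =>
      obtain ⟨i1, i2⟩ := ih
      have h1 : ⁅⁅e 2, e 1⁆, X (n + 1)⁆ = (2 : K) • ⁅e 1, M (n + 2)⁆ := by
        have h : ((n : K) + 1) • (⁅⁅e 2, e 1⁆, X (n + 1)⁆ - (2 : K) • ⁅e 1, M (n + 2)⁆) = 0 := by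
          rw [smul_sub, ← lie_smul, hX, leibniz_lie ⁅e 2, e 1⁆, hG, i1, lie_smul, zero_lie]
          module
        exact sub_eq_zero.mp (smul_cancel (hn n) h)
      have h2 := hA (n + 1)
      have h3 := hB (n + 2)
      rw [i2, lie_smul, h1] at h2
      push_cast at h2 h3
      have h4 : ⁅e 1, M (n + 2)⁆ = ((n : K) + 2) • M (n + 3) := by
        have h : ((((n + 2 : ℕ) : K) + 1) * (((n + 3 : ℕ) : K) + 1)) •
            (⁅e 1, M (n + 2)⁆ - ((n : K) + 2) • M (n + 3)) = 0 := by
          push_cast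
          linear_combination (norm := module) (1 : K) • h2 - ((n : K) + 2) • h3
        exact sub_eq_zero.mp (smul_cancel (mul_ne_zero (hn _) (hn _)) h)
      rw [h4] at h1 h3
      refine ⟨?_, ?_⟩
      · rw [h1]; push_cast; module
      · push_cast
        linear_combination (norm := module) (-1 : K) • h3
  have hB2 : ⁅e 2, X n⁆ = (2 * ((n : K) + 1)) • M (n + 1) := by
    cases n with
    | zero =>
      have h := hB 0
      have hM0 : M 0 = e 1 := by
        have := hM 0
        rw [hX0, hde] at this
        simpa using this
      rw [hM0, lie_self] at h
      push_cast at h ⊢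
      linear_combination (norm := module) (-1 : K) • h
    | succ n => rw [(key n).2]; push_cast; module
  have h := hB n
  rw [hB2] at h
  have h' : ((n : K) + 1) • (⁅e 1, M n⁆ - (n : K) • M (n + 1)) = 0 := by
    linear_combination (norm := module) (-1 : K) • h
  exact sub_eq_zero.mp (smul_cancel (hn n) h')

theorem comm_aux (d e X M : ℕ → L) (hde : ∀ l k, ⁅d l, e k⁆ = e (l + k))
    (hs : ⁅e 0, ⁅e 0, e 1⁆⁆ = 0)
    (hq : ⁅⁅e 3, e 0⁆, e 0⁆ = (3 : K) • ⁅⁅e 2, e 1⁆, e 0⁆)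
    (hX0 : X 0 = e 0) (hX : ∀ n : ℕ, ((n : K) + 1) • X (n + 1) = ⁅e 1, X n⁆)
    (hM : ∀ n : ℕ, ((n : K) + 1) • M n = ⁅d 1, X n⁆) (n : ℕ) :
    ∀ l k : ℕ, l + k = n → ⁅X l, X k⁆ = 0 := by
  have hQ := witt d e X M hde hs hq hX0 hX hM
  have hn : ∀ n : ℕ, (n : K) + 1 ≠ 0 := fun n => by exact_mod_cast Nat.succ_ne_zero n
  have hM0 : M 0 = e 1 := by
    have := hM 0
    rw [hX0, hde] at this
    simpa using this
  induction n using Nat.strong_induction_on with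
  | _ n ih =>
  -- action of `M l` on `X k`
  have hV : ∀ k l : ℕ, l + k < n → ⁅M l, X k⁆ = ((k : K) + 1) • X (l + k + 1) := by
    intro k
    induction k with
    | zero =>
      intro l hl
      have h := congrArg (fun t => ⁅d 1, t⁆) (ih l (by omega) l 0 (by omega))
      simp only [lie_zero] at h
      rw [leibniz_lie, ← hM, ← hM 0, hM0, lie_smul, ← lie_skew (X l) (e 1), ← hX, smul_lie] at h
      have h' : ((l : K) + 1) • (⁅M l, X 0⁆ - X (l + 1)) = 0 := by
        push_cast at h
        linear_combination (norm := module) (1 : K) • h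
      rw [sub_eq_zero.mp (smul_cancel (hn l) h')]
      simp
    | succ k ihk =>
      intro l hl
      have h : ((k : K) + 1) • (⁅M l, X (k + 1)⁆ - ((k : K) + 2) • X (l + k + 2)) = 0 := by
        have e1 := hX (l + k + 1)
        have e2 := ihk l (by omega)
        have e3 := ihk (l + 1) (by omega)
        rw [show l + 1 + k + 1 = l + k + 2 by ring] at e3
        rw [smul_sub, ← lie_smul, hX, leibniz_lie, e2, lie_smul, ← e1, ← lie_skew (M l) (e 1), hQ, neg_lie,
          smul_lie, e3]
        push_cast
        module
      rw [sub_eq_zero.mp (smul_cancel (hn k) h)]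
      push_cast
      rw [show l + (k + 1) + 1 = l + k + 2 by ring]
      module
  -- the recursion
  have hrec : ∀ l k : ℕ, l + k + 1 = n →
      ((l : K) + 1) • ⁅X (l + 1), X k⁆ + ((k : K) + 1) • ⁅X l, X (k + 1)⁆ = 0 := by
    intro l k hlk
    have h := congrArg (fun t => ⁅e 1, t⁆) (ih (l + k) (by omega) l k rfl)
    simp only [lie_zero] at h
    rw [leibniz_lie, ← hX, ← hX, smul_lie, lie_smul] at h
    exact h
  have hc0 : ⁅X 0, X n⁆ = 0 := by
    match n, ih, hV, hrec with
    | 0, _, _, _ => exact lie_self _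
    | 1, _, _, _ =>
      have := hX 0
      rw [hX0] at this
      simp only [Nat.cast_zero, zero_add, one_smul] at this
      rw [hX0, this, ← lie_skew (e 1), lie_neg, hs, neg_zero]
    | m + 2, ih, hV, hrec =>
      have r1 := hrec 0 (m + 1) (by omega)
      have r2 := hrec 1 m (by omega)
      have h := congrArg (fun t => ⁅M 1, t⁆) (ih m (by omega) 0 m (by omega))
      simp only [lie_zero] at h
      rw [leibniz_lie, hV 0 1 (by omega), hV m 1 (by omega), smul_lie, lie_smul,
        show 1 + m + 1 = m + 2 by ring] at h
      push_cast at r1 r2 h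
      simp only [Nat.reduceAdd, zero_add] at r1 r2 h
      have h' : (((m : K) + 1) * (((m + 3 : ℕ) : K) + 1)) • ⁅X 0, X (m + 2)⁆ = 0 := by
        push_cast
        linear_combination (norm := module) ((m : K) + 1) • r1 - (1 : K) • r2 + (2 : K) • h
      exact smul_cancel (mul_ne_zero (hn _) (hn _)) h'
  intro l
  induction l with
  | zero => intro k hk; rw [zero_add] at hk; rw [hk]; exact hc0
  | succ l ihl =>
    intro k hk
    have h := hrec l k (by omega)
    rw [ihl (k + 1) (by omega), smul_zero, add_zero] at h
    exact smul_cancel (hn l) h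

end LieLemmas

theorem D_mix (l k : ℕ) : br (D0 (l + 1)) (D1 k) = D1 (l + k) := by
  have h := RingQuot.mkAlgHom_rel F (SHRel.mix l k)
  simpa [br, D0, D1] using h

theorem D_cubic : br (D1 0) (br (D1 0) (D1 1)) = 0 := by
  have h := RingQuot.mkAlgHom_rel F SHRel.cubic
  simpa [br, D1] using h

theorem D_quad : 3 * br (D1 2) (D1 1) - br (D1 3) (D1 0) + br (D1 1) (D1 0)
      + (κ * (κ - 1)) • (D1 0 * D1 0 + br (D1 1) (D1 0)) = 0 := by
  have h := RingQuot.mkAlgHom_rel F SHRel.quad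
  simpa only [br, D1, map_add, map_sub, map_mul, map_smul, map_ofNat, map_zero] using h

/-- The elements `D_{l,0}`, `l ≥ 1`, pairwise commute in `SH⁺`. -/
theorem statement0 :
    ∀ l l' : ℕ, 1 ≤ l → 1 ≤ l' → br (Drow l) (Drow l') = 0 := by
  letI : LieRing SHp := LieRing.ofAssociativeRing
  letI : LieAlgebra F SHp := LieAlgebra.ofAssociativeAlgebra
  intro l l' hl hl'
  obtain ⟨a, rfl⟩ := Nat.exists_eq_add_of_le' hl
  obtain ⟨b, rfl⟩ := Nat.exists_eq_add_of_le' hl'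
  have hn : ∀ n : ℕ, (n : F) + 1 ≠ 0 := fun n => by exact_mod_cast Nat.succ_ne_zero n
  have hs : ⁅D1 0, ⁅D1 0, D1 1⁆⁆ = 0 := D_cubic
  refine comm_aux (K := F) (L := SHp) (fun l => D0 (l + 1)) D1 (fun n => Drow (n + 1))
    (fun n => ((n : F) + 1)⁻¹ • ⁅D0 2, Drow (n + 1)⁆) D_mix hs ?_ ?_ ?_ ?_ (a + b) a b rfl
  · have h : (3 : F) • ⁅D1 2, D1 1⁆ - ⁅D1 3, D1 0⁆ + ⁅D1 1, D1 0⁆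
      + (κ * (κ - 1)) • (D1 0 * D1 0 + ⁅D1 1, D1 0⁆) = 0 := by
      have h := D_quad
      rw [show (3 : SHp) = algebraMap F SHp 3 from (map_ofNat (algebraMap F SHp) 3).symm, ← Algebra.smul_def] at h
      exact h
    have h0 : ⁅⁅D1 1, D1 0⁆, D1 0⁆ = 0 := by
      rw [← lie_skew, ← lie_skew (D1 1), lie_neg, hs]
      simp
    have h1 : ⁅D1 0 * D1 0, D1 0⁆ = 0 := by
      rw [Ring.lie_def, mul_assoc, sub_self]
    have h2 := congrArg (fun t => ⁅t, D1 0⁆) h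
    simp only [add_lie, sub_lie, smul_lie, h0, h1, zero_lie, smul_zero, add_zero] at h2
    exact (sub_eq_zero.mp h2).symm
  · rfl
  · intro n
    show ((n : F) + 1) • (((n : F) + 1)⁻¹ • br (D1 1) (Drow (n + 1))) = _
    rw [smul_inv_smul₀ (hn n)]
    rfl
  · intro n
    exact smul_inv_smul₀ (hn n) _
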